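/- (Disc embedding) Let c ∈ ℂ and ρ > 0. The disc-embedding constraint |T(θ) − c| ≤ ρ holds for every θ in the ellipsoid U if and only if there exist a real scalar ξ ≥ 0 and a real skew-symmetric matrix 𝒳 ∈ ℝ^{(n+1)×(n+1)} such that the Hermitian (n+2)×(n+2) complex matrix [[−ρ², λ],[λ*, −A₁ − ξB + i𝒳]] is negative semidefinite, where λ = [Z_N − c·Z_D , e − c] ∈ ℂ^{1×(n+1)}. (This is the instance of the dissipativity characterization with x = 1, y = −c, z = |c|² − ρ².) -/

import Mathlib

open Matrix
open scoped ComplexOrder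

/-- The transfer function value `T(θ) = (e + Z_N·θ)/(1 + Z_D·θ)`. -/
noncomputable def Tval {n : ℕ} (e : ℂ) (ZN ZD : Fin n → ℂ) (θ : Fin n → ℝ) : ℂ :=
  (e + ∑ i, ZN i * (θ i : ℂ)) / (1 + ∑ i, ZD i * (θ i : ℂ))

/-- The ellipsoid `U = {θ ∈ ℝⁿ : (θ−θ̂)ᵀP⁻¹(θ−θ̂) < χ}`. -/
noncomputable def ellipsoid {n : ℕ} (P : Matrix (Fin n) (Fin n) ℝ) (θhat : Fin n → ℝ)
    (χ : ℝ) : Set (Fin n → ℝ) :=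
  {θ | (θ - θhat) ⬝ᵥ P⁻¹ *ᵥ (θ - θhat) < χ}

/-- The Hermitian matrix `A₁ = [[Z_D*Z_D, Z_D*],[Z_D, 1]] ∈ ℂ^{(n+1)×(n+1)}`. -/
def A1mat {n : ℕ} (ZD : Fin n → ℂ) : Matrix (Fin n ⊕ Unit) (Fin n ⊕ Unit) ℂ :=
  Matrix.fromBlocks
    (Matrix.of fun i j => starRingEnd ℂ (ZD i) * ZD j)
    (Matrix.of fun i _ => starRingEnd ℂ (ZD i))
    (Matrix.of fun _ j => ZD j)
    (Matrix.of fun _ _ => 1)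

/-- The real symmetric matrix `B = [[P⁻¹, −P⁻¹θ̂],[−θ̂ᵀP⁻¹, θ̂ᵀP⁻¹θ̂ − χ]]`. -/
noncomputable def Bmat {n : ℕ} (P : Matrix (Fin n) (Fin n) ℝ) (θhat : Fin n → ℝ) (χ : ℝ) :
    Matrix (Fin n ⊕ Unit) (Fin n ⊕ Unit) ℝ :=
  Matrix.fromBlocks P⁻¹
    (Matrix.of fun i _ => -(P⁻¹ *ᵥ θhat) i)
    (Matrix.of fun _ j => -(θhat ᵥ* P⁻¹) j)
    (Matrix.of fun _ _ => θhat ⬝ᵥ P⁻¹ *ᵥ θhat - χ)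

/-- The row vector `λ = [Z_N − c·Z_D , e − c] ∈ ℂ^{1×(n+1)}`. -/
def lamDisc {n : ℕ} (e : ℂ) (ZN ZD : Fin n → ℂ) (c : ℂ) : Fin n ⊕ Unit → ℂ :=
  Sum.elim (fun i => ZN i - c * ZD i) (fun _ => e - c)

/-- The Hermitian `(n+2)×(n+2)` matrix `[[−ρ², λ],[λ*, −A₁ − ξB + i𝒳]]` of the disc
embedding LMI. -/
noncomputable def discMat {n : ℕ} (e : ℂ) (ZN ZD : Fin n → ℂ)
    (P : Matrix (Fin n) (Fin n) ℝ) (θhat : Fin n → ℝ) (χ : ℝ)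
    (c : ℂ) (ρ : ℝ) (ξ : ℝ) (X : Matrix (Fin n ⊕ Unit) (Fin n ⊕ Unit) ℝ) :
    Matrix (Unit ⊕ (Fin n ⊕ Unit)) (Unit ⊕ (Fin n ⊕ Unit)) ℂ :=
  Matrix.fromBlocks
    (Matrix.of fun _ _ => -((ρ ^ 2 : ℝ) : ℂ))
    (Matrix.of fun _ j => lamDisc e ZN ZD c j)
    (Matrix.of fun i _ => starRingEnd ℂ (lamDisc e ZN ZD c i))
    (-(A1mat ZD) - (ξ : ℂ) • (Bmat P θhat χ).map (fun b => (b : ℂ)) +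
      Complex.I • X.map (fun b => (b : ℂ)))

/-!
Write `d = [Z_D, 1]` and `λ = [Z_N − c·Z_D, e − c]`. Clearing denominators, `|T(θ) − c| ≤ ρ` says
that the Hermitian form `A₁ − ρ⁻²λ*λ`, with `A₁ = d*d`, is nonnegative at `(θ, 1)`. On real vectors
only the real part `F` of that matrix matters, and by homogeneity the constraint on the ellipsoid
becomes `xᵀBx < 0 → 0 ≤ xᵀFx`, because `P⁻¹` being positive semidefinite keeps the negative cone
of `B` away from the hyperplane at infinity. The S-lemma turns this into `F + ξB ⪰ 0`. The matrix
`𝒳` absorbs the imaginary part of `A₁ − ρ⁻²λ*λ`, which is skew-symmetric, and `−ρ²` is the corner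
whose Schur complement produces `ρ⁻²λ*λ`.
-/

section SLemma

variable {V : Type*} [AddCommGroup V] [Module ℝ V] {f g : QuadraticForm ℝ V}

lemma quadraticForm_add_smul {R M : Type*} [CommRing R] [AddCommGroup M] [Module R M]
    (Q : QuadraticForm R M) (x y : M) (t : R) :
    Q (x + t • y) = Q x + t * QuadraticMap.polar Q x y + t ^ 2 * Q y := by
  rw [QuadraticMap.map_add Q, QuadraticMap.map_smul, QuadraticMap.polar_smul_right]
  simp only [smul_eq_mul]
  ring

lemma exists_pos_quadratic_eq_zero {a b c : ℝ} (ha : 0 < a) (hc : c < 0) :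
    ∃ t, 0 < t ∧ a * (t * t) + b * t + c = 0 := by
  have hdisc : b ^ 2 < discrim a b c := by
    rw [discrim]
    linarith [mul_neg_of_pos_of_neg ha hc]
  refine ⟨(-b + √(discrim a b c)) / (2 * a), ?_, ?_⟩
  · have hb : b < √(discrim a b c) := Real.lt_sqrt_of_sq_lt hdisc
    exact div_pos (by linarith) (by linarith)
  · have hsq : discrim a b c = √(discrim a b c) * √(discrim a b c) :=
      (Real.mul_self_sqrt ((sq_nonneg b).trans hdisc.le)).symm
    exact (quadratic_eq_zero_iff ha.ne' hsq _).mpr (Or.inl rfl)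

lemma exists_pos_quadraticForm_add_smul_eq_zero {x y : V} (hx : g x < 0) (hy : 0 < g y) :
    ∃ t : ℝ, 0 < t ∧ g (x + t • y) = 0 := by
  obtain ⟨t, ht, hroot⟩ :=
    exists_pos_quadratic_eq_zero (b := QuadraticMap.polar g x y) hy hx
  refine ⟨t, ht, ?_⟩
  rw [quadraticForm_add_smul]
  linarith

lemma quadraticForm_nonneg_of_nonpos {s : V} (hs : g s < 0) (h : ∀ x, g x < 0 → 0 ≤ f x)
    {x : V} (hx : g x ≤ 0) : 0 ≤ f x := by
  wlog hpolar : QuadraticMap.polar g x s ≤ 0 generalizing s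
  · refine this (s := -s) (by rwa [QuadraticMap.map_neg]) ?_
    rw [QuadraticMap.polar_neg_right]
    linarith
  have hnonneg (t : ℝ) (ht : 0 < t) :
      0 ≤ f x + t * QuadraticMap.polar f x s + t ^ 2 * f s := by
    rw [← quadraticForm_add_smul]
    apply h
    rw [quadraticForm_add_smul]
    linarith [mul_nonpos_of_nonneg_of_nonpos ht.le hpolar,
      mul_neg_of_pos_of_neg (pow_pos ht 2) hs]
  have hcont : Continuous fun t : ℝ => f x + t * QuadraticMap.polar f x s + t ^ 2 * f s := by
    fun_prop
  have hlim := (hcont.tendsto' 0 (f x) (by simp)).mono_left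
    (nhdsWithin_le_nhds (s := Set.Ioi 0))
  exact ge_of_tendsto hlim (eventually_mem_nhdsWithin.mono hnonneg)

-- `q` is affine along the line through `x` in direction `y`.
lemma quadraticForm_nonneg_of_add_smul_of_sub_smul {q : QuadraticForm ℝ V} {x y : V}
    (hy : q y = 0) {t u : ℝ} (ht : 0 < t) (hu : 0 < u) (hxt : 0 ≤ q (x + t • y))
    (hxu : 0 ≤ q (x + u • -y)) : 0 ≤ q x := by
  rw [quadraticForm_add_smul, hy] at hxt
  rw [quadraticForm_add_smul, QuadraticMap.map_neg, hy, QuadraticMap.polar_neg_right] at hxu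
  have hsum : 0 ≤ (u + t) * q x := by
    linear_combination u * hxt + t * hxu
  exact nonneg_of_mul_nonneg_right hsum (add_pos hu ht)

lemma neg_div_le_div_neg_of_nonneg_of_nonpos (h : ∀ x, g x ≤ 0 → 0 ≤ f x) {x y : V}
    (hx : g x < 0) (hy : 0 < g y) : -f y / g y ≤ f x / -g x := by
  obtain ⟨t, ht, hgt⟩ := exists_pos_quadraticForm_add_smul_eq_zero hx hy
  obtain ⟨u, hu, hgu⟩ :=
    exists_pos_quadraticForm_add_smul_eq_zero hx ((g.map_neg y).symm ▸ hy)
  let q : QuadraticForm ℝ V := g y • f - f y • g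
  have hq (z : V) : q z = g y * f z - f y * g z := rfl
  have hq_nonneg (z : V) (hz : g z = 0) : 0 ≤ q z := by
    simpa [hq, hz] using mul_nonneg hy.le (h z hz.le)
  have hqx : 0 ≤ q x :=
    quadraticForm_nonneg_of_add_smul_of_sub_smul (by rw [hq]; ring) ht hu
      (hq_nonneg _ hgt) (hq_nonneg _ hgu)
  rw [hq] at hqx
  rw [div_le_div_iff₀ hy (neg_pos.mpr hx)]
  linarith

theorem s_lemma {s : V} (hs : g s < 0) :
    (∀ x, g x < 0 → 0 ≤ f x) ↔ ∃ ξ : ℝ, 0 ≤ ξ ∧ ∀ x, 0 ≤ f x + ξ * g x := by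
  constructor
  · intro h
    have hle : ∀ x, g x ≤ 0 → 0 ≤ f x := fun x => quadraticForm_nonneg_of_nonpos hs h
    let lower : Set ℝ := insert 0 ((fun y => -f y / g y) '' {y | 0 < g y})
    let upper : Set ℝ := (fun x => f x / -g x) '' {x | g x < 0}
    have hsep : ∀ a ∈ lower, ∀ b ∈ upper, a ≤ b := by
      rintro _ (rfl | ⟨y, hy, rfl⟩) _ ⟨x, hx, rfl⟩
      · exact div_nonneg (h x hx) (neg_pos.mpr hx).le
      · exact neg_div_le_div_neg_of_nonneg_of_nonpos hle hx hy
    obtain ⟨ξ, hlower, hupper⟩ :=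
      exists_between_of_forall_le (Set.insert_nonempty _ _) (Set.Nonempty.image _ ⟨s, hs⟩) hsep
    refine ⟨ξ, hlower (Set.mem_insert _ _), fun x => ?_⟩
    rcases lt_trichotomy (g x) 0 with hx | hx | hx
    · have hξ : ξ ≤ f x / -g x := hupper ⟨x, hx, rfl⟩
      rw [le_div_iff₀ (neg_pos.mpr hx)] at hξ
      linarith
    · simpa [hx] using hle x hx.le
    · have hξ : -f x / g x ≤ ξ := hlower (Set.mem_insert_of_mem _ ⟨x, hx, rfl⟩)
      rw [div_le_iff₀ hx] at hξ
      linarith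
  · rintro ⟨ξ, hξ, h⟩ x hx
    linarith [h x, mul_nonpos_of_nonneg_of_nonpos hξ hx.le]

end SLemma

section PosSemidef

variable {ι : Type*}

lemma smul_dotProduct_mulVec_smul {R : Type*} [CommSemiring R] [Fintype ι] (M : Matrix ι ι R)
    (t : R) (x : ι → R) : (t • x) ⬝ᵥ M *ᵥ (t • x) = t ^ 2 * (x ⬝ᵥ M *ᵥ x) := by
  simp only [mulVec_smul, smul_dotProduct, dotProduct_smul, smul_eq_mul]
  ring

theorem posSemidef_s_lemma [Fintype ι] {F G : Matrix ι ι ℝ} (hF : F.IsHermitian)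
    (hG : G.IsHermitian) {s : ι → ℝ} (hs : s ⬝ᵥ G *ᵥ s < 0) :
    (∀ x, x ⬝ᵥ G *ᵥ x < 0 → 0 ≤ x ⬝ᵥ F *ᵥ x) ↔
      ∃ ξ : ℝ, 0 ≤ ξ ∧ (F + ξ • G).PosSemidef := by
  classical
  have happly (M : Matrix ι ι ℝ) (x : ι → ℝ) : M.toQuadraticForm' x = x ⬝ᵥ M *ᵥ x := by
    simp [toQuadraticForm', toLinearMap₂'_apply']
  have hherm (ξ : ℝ) : (F + ξ • G).IsHermitian :=
    hF.add (hG.smul (IsSelfAdjoint.all ξ))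
  have hslater : G.toQuadraticForm' s < 0 := by rwa [happly]
  simpa only [happly, posSemidef_iff_dotProduct_mulVec, hherm, true_and, star_trivial,
    add_mulVec, smul_mulVec, dotProduct_add, dotProduct_smul, smul_eq_mul]
    using s_lemma (f := F.toQuadraticForm') hslater

lemma dotProduct_map_re_mulVec [Fintype ι] (M : Matrix ι ι ℂ) (x : ι → ℝ) :
    x ⬝ᵥ M.map Complex.re *ᵥ x =
      (star (Complex.ofReal ∘ x) ⬝ᵥ M *ᵥ (Complex.ofReal ∘ x)).re := by
  simp [dotProduct, mulVec, Complex.re_sum, Finset.mul_sum]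

lemma posSemidef_map_re [Finite ι] {M : Matrix ι ι ℂ} (hM : M.PosSemidef) :
    (M.map Complex.re).PosSemidef := by
  have := Fintype.ofFinite ι
  refine .of_dotProduct_mulVec_nonneg (hM.isHermitian.map _ fun _ => by simp) fun x => ?_
  rw [star_trivial, dotProduct_map_re_mulVec]
  exact (Complex.le_def.mp (hM.dotProduct_mulVec_nonneg _)).1

lemma posSemidef_map_ofReal [Finite ι] {S : Matrix ι ι ℝ} (hS : S.PosSemidef) :
    (S.map Complex.ofReal).PosSemidef := by
  obtain ⟨m, v, rfl⟩ := posSemidef_iff_eq_sum_vecMulVec.mp hS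
  have hmap : (∑ k, vecMulVec (v k) (star (v k))).map Complex.ofReal =
      ∑ k, vecMulVec (Complex.ofReal ∘ v k) (star (Complex.ofReal ∘ v k)) := by
    ext i j
    simp [Matrix.sum_apply, vecMulVec_apply]
  rw [hmap]
  exact posSemidef_sum _ fun k _ => posSemidef_vecMulVec_self_star _

theorem exists_skew_posSemidef_sub_I_smul_iff [Finite ι] {M : Matrix ι ι ℂ}
    (hM : M.IsHermitian) :
    (∃ X : Matrix ι ι ℝ, Xᵀ = -X ∧ (M - Complex.I • X.map Complex.ofReal).PosSemidef) ↔
      (M.map Complex.re).PosSemidef := by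
  constructor
  · rintro ⟨X, -, hX⟩
    convert posSemidef_map_re hX using 1
    ext i j
    simp
  · intro hre
    refine ⟨M.map Complex.im, ?_, ?_⟩
    · ext i j
      simp [← hM.apply i j]
    · convert posSemidef_map_ofReal hre using 1
      ext i j
      simp [Complex.ext_iff]

lemma posSemidef_fromBlocks_replicateRow_iff [Finite ι] {r : ℝ} (hr : 0 < r) (v : ι → ℂ)
    (D : Matrix ι ι ℂ) :
    (fromBlocks (of fun _ _ : Unit => (r : ℂ)) (replicateRow Unit v)
        (replicateCol Unit (star v)) D).PosSemidef ↔
      (D - (r : ℂ)⁻¹ • vecMulVec (star v) v).PosSemidef := by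
  have hr' : (r : ℂ) ≠ 0 := Complex.ofReal_ne_zero.mpr hr.ne'
  have hcorner : (of fun _ _ : Unit => (r : ℂ)) = diagonal fun _ => (r : ℂ) := by
    ext i j
    simp
  have hpos : (diagonal fun _ : Unit => (r : ℂ)).PosDef :=
    .diagonal fun _ => Complex.zero_lt_real.mpr hr
  have hinv : (diagonal fun _ : Unit => (r : ℂ))⁻¹ = diagonal fun _ => (r : ℂ)⁻¹ :=
    inv_eq_right_inv (by simp [hr'])
  have hschur : (replicateRow Unit v)ᴴ * (diagonal fun _ : Unit => (r : ℂ))⁻¹ *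
      replicateRow Unit v = (r : ℂ)⁻¹ • vecMulVec (star v) v := by
    rw [hinv]
    ext i j
    simp [vecMulVec_apply, mul_apply, mul_comm, mul_left_comm]
  have := hpos.isUnit.invertible
  rw [hcorner, ← conjTranspose_replicateRow, PosDef.fromBlocks₁₁ _ _ hpos, hschur]

lemma dotProduct_vecMulVec_star_mulVec [Fintype ι] (v x : ι → ℂ) :
    star x ⬝ᵥ vecMulVec (star v) v *ᵥ x = ((‖v ⬝ᵥ x‖ ^ 2 : ℝ) : ℂ) := by
  rw [vecMulVec_mulVec, dotProduct_smul, star_dotProduct_star,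
    op_smul_eq_mul, Complex.ofReal_pow]
  exact Complex.conj_mul' _

end PosSemidef

section Ellipsoid

variable {n : ℕ} {P : Matrix (Fin n) (Fin n) ℝ}

lemma isHermitian_Bmat (hP : P.IsHermitian) (θhat : Fin n → ℝ) (χ : ℝ) :
    (Bmat P θhat χ).IsHermitian := by
  have hinv : (P⁻¹)ᵀ = P⁻¹ := (conjTranspose_eq_transpose_of_trivial _).symm.trans hP.inv
  refine .fromBlocks hP.inv ?_ (by ext; simp)
  ext i j
  simp [← mulVec_transpose, hinv]

lemma dotProduct_Bmat_mulVec (P : Matrix (Fin n) (Fin n) ℝ) (θhat : Fin n → ℝ) (χ : ℝ)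
    (θ : Fin n → ℝ) (t : ℝ) :
    Sum.elim θ (fun _ => t) ⬝ᵥ Bmat P θhat χ *ᵥ Sum.elim θ (fun _ => t) =
      (θ - t • θhat) ⬝ᵥ P⁻¹ *ᵥ (θ - t • θhat) - t ^ 2 * χ := by
  have hrow : (of fun (_ : Unit) j => -(θhat ᵥ* P⁻¹) j) *ᵥ θ =
      fun _ => -(θhat ⬝ᵥ P⁻¹ *ᵥ θ) := by
    ext
    rw [dotProduct_mulVec]
    simp [mulVec, dotProduct]
  have hcol : (of fun i (_ : Unit) => -(P⁻¹ *ᵥ θhat) i) *ᵥ (fun _ => t) =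
      -(t • (P⁻¹ *ᵥ θhat)) := by
    ext
    simp [mulVec, dotProduct, mul_comm]
  have hunit (a b : Unit → ℝ) : a ⬝ᵥ b = a () * b () := by simp [dotProduct]
  have hcorner : (of fun (_ _ : Unit) => θhat ⬝ᵥ P⁻¹ *ᵥ θhat - χ) *ᵥ (fun _ => t) =
      fun _ => (θhat ⬝ᵥ P⁻¹ *ᵥ θhat - χ) * t := by
    ext
    exact hunit _ _
  rw [Bmat, fromBlocks_mulVec, sumElim_dotProduct_sumElim]
  simp only [Sum.elim_comp_inl, Sum.elim_comp_inr, hrow, hcol, hcorner, hunit, Pi.add_apply,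
    mulVec_sub, mulVec_smul, dotProduct_add, dotProduct_sub, sub_dotProduct, dotProduct_neg,
    smul_dotProduct, dotProduct_smul, smul_eq_mul]
  ring

lemma dotProduct_Bmat_mulVec_sumElim_one_neg_iff (θhat : Fin n → ℝ) (χ : ℝ) (θ : Fin n → ℝ) :
    Sum.elim θ 1 ⬝ᵥ Bmat P θhat χ *ᵥ Sum.elim θ 1 < 0 ↔ θ ∈ ellipsoid P θhat χ := by
  have happly : Sum.elim θ 1 ⬝ᵥ Bmat P θhat χ *ᵥ Sum.elim θ 1 =
      (θ - θhat) ⬝ᵥ P⁻¹ *ᵥ (θ - θhat) - χ := by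
    simpa only [one_smul, one_pow, one_mul, ← Pi.one_def] using
      dotProduct_Bmat_mulVec P θhat χ θ 1
  rw [happly]
  exact sub_neg

lemma exists_eq_smul_of_dotProduct_Bmat_mulVec_neg (hP : P.PosSemidef) {θhat : Fin n → ℝ}
    {χ : ℝ} {x : Fin n ⊕ Unit → ℝ} (hx : x ⬝ᵥ Bmat P θhat χ *ᵥ x < 0) :
    ∃ θ ∈ ellipsoid P θhat χ, ∃ t : ℝ, x = t • Sum.elim θ 1 := by
  obtain ⟨θ, t, rfl⟩ : ∃ θ t, x = Sum.elim θ fun _ => t :=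
    ⟨x ∘ Sum.inl, x (Sum.inr ()), (Sum.elim_comp_inl_inr x).symm⟩
  have ht : t ≠ 0 := by
    rintro rfl
    have hneg : θ ⬝ᵥ P⁻¹ *ᵥ θ < 0 := by simpa [dotProduct_Bmat_mulVec] using hx
    exact hneg.not_ge (hP.inv.dotProduct_mulVec_nonneg θ)
  have hsmul : (Sum.elim θ fun _ : Unit => t) = t • Sum.elim (t⁻¹ • θ) 1 := by
    ext (i | i) <;> simp [ht]
  refine ⟨t⁻¹ • θ, ?_, t, hsmul⟩
  rw [hsmul, smul_dotProduct_mulVec_smul] at hx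
  exact (dotProduct_Bmat_mulVec_sumElim_one_neg_iff _ _ _).mp
    (neg_of_mul_neg_right hx (sq_nonneg t))

theorem forall_mem_ellipsoid_dotProduct_mulVec_nonneg_iff (hP : P.PosSemidef)
    (θhat : Fin n → ℝ) (χ : ℝ) (F : Matrix (Fin n ⊕ Unit) (Fin n ⊕ Unit) ℝ) :
    (∀ θ ∈ ellipsoid P θhat χ, 0 ≤ Sum.elim θ 1 ⬝ᵥ F *ᵥ Sum.elim θ 1) ↔
      ∀ x, x ⬝ᵥ Bmat P θhat χ *ᵥ x < 0 → 0 ≤ x ⬝ᵥ F *ᵥ x := by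
  constructor
  · intro h x hx
    obtain ⟨θ, hθ, t, rfl⟩ := exists_eq_smul_of_dotProduct_Bmat_mulVec_neg hP hx
    rw [smul_dotProduct_mulVec_smul]
    exact mul_nonneg (sq_nonneg t) (h θ hθ)
  · exact fun h θ hθ => h _ ((dotProduct_Bmat_mulVec_sumElim_one_neg_iff _ _ _).mpr hθ)

end Ellipsoid

section DiscEmbedding

variable {n : ℕ} (e : ℂ) (ZN ZD : Fin n → ℂ) (c : ℂ) (ρ : ℝ)

/-- The Schur complement `A₁ − ρ⁻²λ*λ` of the corner `−ρ²` of the negated disc embedding matrix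
at `ξ = 0`, `𝒳 = 0`; its Hermitian form at `(θ, 1)` is nonnegative
exactly when `|T(θ) − c| ≤ ρ`. -/
noncomputable def discSchur : Matrix (Fin n ⊕ Unit) (Fin n ⊕ Unit) ℂ :=
  A1mat ZD - ((ρ ^ 2 : ℝ) : ℂ)⁻¹ •
    vecMulVec (star (lamDisc e ZN ZD c)) (lamDisc e ZN ZD c)

lemma A1mat_eq_vecMulVec : A1mat ZD = vecMulVec (star (Sum.elim ZD 1)) (Sum.elim ZD 1) := by
  ext (i | i) (j | j) <;> simp [A1mat, vecMulVec_apply]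

lemma isHermitian_discSchur : (discSchur e ZN ZD c ρ).IsHermitian := by
  rw [discSchur, A1mat_eq_vecMulVec]
  refine (posSemidef_vecMulVec_star_self _).isHermitian.sub
    ((posSemidef_vecMulVec_star_self _).isHermitian.smul ?_)
  simp [isSelfAdjoint_iff]

lemma dotProduct_re_discSchur_mulVec (x : Fin n ⊕ Unit → ℝ) :
    x ⬝ᵥ (discSchur e ZN ZD c ρ).map Complex.re *ᵥ x =
      ‖Sum.elim ZD 1 ⬝ᵥ Complex.ofReal ∘ x‖ ^ 2 -
        (ρ ^ 2)⁻¹ * ‖lamDisc e ZN ZD c ⬝ᵥ Complex.ofReal ∘ x‖ ^ 2 := by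
  rw [dotProduct_map_re_mulVec, discSchur, A1mat_eq_vecMulVec, sub_mulVec, smul_mulVec,
    dotProduct_sub, dotProduct_smul, dotProduct_vecMulVec_star_mulVec,
    dotProduct_vecMulVec_star_mulVec, ← Complex.ofReal_inv, smul_eq_mul, ← Complex.ofReal_mul,
    ← Complex.ofReal_sub, Complex.ofReal_re]

lemma sumElim_one_dotProduct_ofReal_sumElim_one (θ : Fin n → ℝ) :
    Sum.elim ZD (1 : Unit → ℂ) ⬝ᵥ Complex.ofReal ∘ Sum.elim θ 1 =
      1 + ∑ i, ZD i * (θ i : ℂ) := by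
  simp [dotProduct, add_comm]

lemma lamDisc_dotProduct_ofReal_sumElim_one {θ : Fin n → ℝ}
    (hden : 1 + ∑ i, ZD i * (θ i : ℂ) ≠ 0) :
    lamDisc e ZN ZD c ⬝ᵥ Complex.ofReal ∘ Sum.elim θ 1 =
      (Tval e ZN ZD θ - c) * (1 + ∑ i, ZD i * (θ i : ℂ)) := by
  have hlam : lamDisc e ZN ZD c ⬝ᵥ Complex.ofReal ∘ Sum.elim θ 1 =
      ∑ i, (ZN i - c * ZD i) * (θ i : ℂ) + (e - c) := by
    simp [dotProduct, lamDisc]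
  rw [hlam, sub_mul, Tval, div_mul_cancel₀ _ hden]
  simp only [sub_mul, Finset.sum_sub_distrib, mul_assoc, ← Finset.mul_sum]
  ring

variable {ρ}

lemma norm_Tval_sub_le_iff (hρ : 0 < ρ) {θ : Fin n → ℝ}
    (hden : 1 + ∑ i, ZD i * (θ i : ℂ) ≠ 0) :
    ‖Tval e ZN ZD θ - c‖ ≤ ρ ↔
      0 ≤ Sum.elim θ 1 ⬝ᵥ (discSchur e ZN ZD c ρ).map Complex.re *ᵥ Sum.elim θ 1 := by
  rw [dotProduct_re_discSchur_mulVec, lamDisc_dotProduct_ofReal_sumElim_one e ZN ZD c hden,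
    sumElim_one_dotProduct_ofReal_sumElim_one, norm_mul, sub_nonneg,
    inv_mul_le_iff₀ (pow_pos hρ 2), ← mul_pow,
    pow_le_pow_iff_left₀ (by positivity) (by positivity) two_ne_zero,
    mul_le_mul_iff_left₀ (norm_pos_iff.mpr hden)]

lemma posSemidef_neg_discMat_iff (hρ : 0 < ρ) (P : Matrix (Fin n) (Fin n) ℝ)
    (θhat : Fin n → ℝ) (χ ξ : ℝ) (X : Matrix (Fin n ⊕ Unit) (Fin n ⊕ Unit) ℝ) :
    (-(discMat e ZN ZD P θhat χ c ρ ξ X)).PosSemidef ↔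
      (discSchur e ZN ZD c ρ + (ξ • Bmat P θhat χ).map Complex.ofReal -
        Complex.I • X.map Complex.ofReal).PosSemidef := by
  have hblocks : -(discMat e ZN ZD P θhat χ c ρ ξ X) =
      fromBlocks (of fun _ _ : Unit => ((ρ ^ 2 : ℝ) : ℂ))
        (replicateRow Unit (-lamDisc e ZN ZD c))
        (replicateCol Unit (star (-lamDisc e ZN ZD c)))
        (A1mat ZD + (ξ • Bmat P θhat χ).map Complex.ofReal -
          Complex.I • X.map Complex.ofReal) := by
    ext (i | i) (j | j) <;> simp [discMat, add_comm, sub_eq_add_neg]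
  rw [hblocks, posSemidef_fromBlocks_replicateRow_iff (pow_pos hρ 2), star_neg, neg_vecMulVec,
    vecMulVec_neg, neg_neg, discSchur]
  congr! 1
  abel

theorem exists_skew_posSemidef_neg_discMat_iff (hρ : 0 < ρ) {P : Matrix (Fin n) (Fin n) ℝ}
    (hP : P.IsHermitian) (θhat : Fin n → ℝ) (χ ξ : ℝ) :
    (∃ X : Matrix (Fin n ⊕ Unit) (Fin n ⊕ Unit) ℝ, Xᵀ = -X ∧
        (-(discMat e ZN ZD P θhat χ c ρ ξ X)).PosSemidef) ↔
      ((discSchur e ZN ZD c ρ).map Complex.re + ξ • Bmat P θhat χ).PosSemidef := by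
  have hherm : (discSchur e ZN ZD c ρ +
      (ξ • Bmat P θhat χ).map Complex.ofReal).IsHermitian :=
    (isHermitian_discSchur e ZN ZD c ρ).add
      (((isHermitian_Bmat hP θhat χ).smul (.all ξ)).map _ fun _ => by simp)
  have hre : (discSchur e ZN ZD c ρ + (ξ • Bmat P θhat χ).map Complex.ofReal).map Complex.re =
      (discSchur e ZN ZD c ρ).map Complex.re + ξ • Bmat P θhat χ := by
    ext
    simp
  simp_rw [posSemidef_neg_discMat_iff e ZN ZD c hρ, exists_skew_posSemidef_sub_I_smul_iff hherm,
    hre]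

end DiscEmbedding

/-- Disc embedding: `|T(θ) − c| ≤ ρ` holds for every `θ` in the ellipsoid `U` iff there
exist `ξ ≥ 0` and a real skew-symmetric matrix `𝒳` such that the Hermitian matrix
`[[−ρ², λ],[λ*, −A₁ − ξB + i𝒳]]` with `λ = [Z_N − c·Z_D , e − c]` is negative
semidefinite. -/
theorem disc_embedding_iff_LMI {n : ℕ} (e : ℂ) (ZN ZD : Fin n → ℂ)
    (P : Matrix (Fin n) (Fin n) ℝ) (hP : P.PosDef)
    (θhat : Fin n → ℝ) (χ : ℝ) (hχ : 0 < χ)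
    (hden : ∀ θ ∈ ellipsoid P θhat χ, (1 : ℂ) + ∑ i, ZD i * (θ i : ℂ) ≠ 0)
    (c : ℂ) (ρ : ℝ) (hρ : 0 < ρ) :
    (∀ θ ∈ ellipsoid P θhat χ, ‖Tval e ZN ZD θ - c‖ ≤ ρ) ↔
      ∃ ξ : ℝ, 0 ≤ ξ ∧
        ∃ X : Matrix (Fin n ⊕ Unit) (Fin n ⊕ Unit) ℝ, Xᵀ = -X ∧
          (-(discMat e ZN ZD P θhat χ c ρ ξ X)).PosSemidef := by
  have hcenter : Sum.elim θhat 1 ⬝ᵥ Bmat P θhat χ *ᵥ Sum.elim θhat 1 < 0 :=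
    (dotProduct_Bmat_mulVec_sumElim_one_neg_iff θhat χ θhat).mpr (by simpa [ellipsoid] using hχ)
  let F := (discSchur e ZN ZD c ρ).map Complex.re
  have hF : F.IsHermitian := (isHermitian_discSchur e ZN ZD c ρ).map _ fun _ => by simp
  calc
    _ ↔ ∀ θ ∈ ellipsoid P θhat χ, 0 ≤ Sum.elim θ 1 ⬝ᵥ F *ᵥ Sum.elim θ 1 :=
      forall₂_congr fun θ hθ => norm_Tval_sub_le_iff e ZN ZD c hρ (hden θ hθ)
    _ ↔ ∀ x, x ⬝ᵥ Bmat P θhat χ *ᵥ x < 0 → 0 ≤ x ⬝ᵥ F *ᵥ x :=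
      forall_mem_ellipsoid_dotProduct_mulVec_nonneg_iff hP.posSemidef θhat χ F
    _ ↔ ∃ ξ : ℝ, 0 ≤ ξ ∧ (F + ξ • Bmat P θhat χ).PosSemidef :=
      posSemidef_s_lemma hF (isHermitian_Bmat hP.isHermitian θhat χ) hcenter
    _ ↔ _ := by
      simp_rw [exists_skew_posSemidef_neg_discMat_iff e ZN ZD c hρ hP.isHermitian, F]
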